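/- If G is a countably infinite MB-homogeneous simple graph such that both G and its complement are connected, then G is bimorphism-equivalent to the Rado graph. -/

import Mathlib

/-!
Back and forth builds a bijective homomorphism `G → H` between countable graphs as soon as every
finite set of vertices of `H` has a common neighbour (`HasCones H`) and every finite set of vertices
of `G` has a common non-neighbour (`HasCones Gᶜ`). The Rado graph `R` and its complement have cones,
so it is enough to prove `HasCones G` and `HasCones Gᶜ`. Complements of MB-homogeneous graphs are
MB-homogeneous (invert the maps), so the two claims are dual to each other.

The key fact (`IsMBHomogeneous.hasCones`) is that a connected MB-homogeneous graph with an infinite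
independent set `J` has cones. Otherwise let `k + 1` be the least size of a set without a common
neighbour. MB-homogeneity transports common neighbours along maps that add edges, so `k + 1`
independent vertices never have a common neighbour, while any `k` vertices do. Connectedness gives
`k ≥ 2`: if `k = 0` there is an isolated vertex, and if `k = 1` adjacency is transitive.

Suppose `p` is joined to a set `I ⊆ J` of size `k`. Then `p` has no other neighbour in `J`, and every
neighbour of `p` outside `J` is joined to a member of `I`. Applied to common neighbours of such `p`
and of further members of `J`, this yields common neighbours of configurations with few edges, hence
of all denser ones: an edge with `k - 1` more vertices, two edges with `k - 2` more vertices, a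
triangle with `k - 1` more vertices. With these one builds a triangle `a₁ a₂ a₃` whose vertices are
joined to `k`-subsets `T₁, T₂, T₃` of `J` with empty common intersection. A common neighbour of the
triangle and of `k - 1` members of `J` outside the `Tᵢ` meets each `Tᵢ`, hence is joined to at least
two further members of `J`, so to `k + 1` independent vertices: a contradiction.

By Ramsey's theorem `G` or `Gᶜ` has an infinite independent set; say `G` does. Then `G` has cones,
hence an infinite clique, which is an infinite independent set of `Gᶜ`, so `Gᶜ` has cones too.
-/

/-- `G` is MB-homogeneous: every monomorphism between finite induced subgraphs
extends to a bijective endomorphism (bimorphism) of `G`. -/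
def IsMBHomogeneous {V : Type*} (G : SimpleGraph V) : Prop :=
  ∀ (A : Finset V) (f : V → V), Set.InjOn f ↑A →
    (∀ a ∈ A, ∀ b ∈ A, G.Adj a b → G.Adj (f a) (f b)) →
    ∃ F : G →g G, Function.Bijective F ∧ ∀ a ∈ A, F a = f a

/-- Two graphs are bimorphism-equivalent if there are bijective homomorphisms
in both directions. -/
def BimEquiv {V W : Type*} (G : SimpleGraph V) (H : SimpleGraph W) : Prop :=
  (∃ f : G →g H, Function.Bijective f) ∧ (∃ g : H →g G, Function.Bijective g)

/-- `R` is a Rado graph: a countably infinite graph such that for all disjoint finite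
vertex sets `A`, `B` there is a vertex outside `A ∪ B` adjacent to every vertex of `A`
and to no vertex of `B`. -/
def IsRado {W : Type*} (R : SimpleGraph W) : Prop :=
  Countable W ∧ Infinite W ∧
  ∀ A B : Finset W, Disjoint A B →
    ∃ z, z ∉ A ∧ z ∉ B ∧ (∀ a ∈ A, R.Adj z a) ∧ (∀ b ∈ B, ¬ R.Adj z b)

/-- `G` has cones: every finite set of vertices has a common neighbour. By irreflexivity the
common neighbour automatically lies outside the set. -/
def HasCones {V : Type*} (G : SimpleGraph V) : Prop :=
  ∀ A : Finset V, ∃ c, ∀ a ∈ A, G.Adj c a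

/-! ### The Rado graph and the back-and-forth argument -/

/-- Back and forth: a new vertex of `G` goes to a common neighbour of all images chosen so far, and
a new vertex of `H` receives a vertex of `G` with no neighbour in the domain so far. -/
theorem exists_bijective_hom {V W : Type*} [Countable V] [Countable W]
    {G : SimpleGraph V} {H : SimpleGraph W} (hG : HasCones Gᶜ) (hH : HasCones H) :
    ∃ f : G →g H, Function.Bijective f := by
  classical
  -- Finite partial injective homomorphisms, ordered by inclusion.
  let P := {f : Finset (V × W) // ∀ p ∈ f, ∀ q ∈ f,
    (p.1 = q.1 ↔ p.2 = q.2) ∧ (G.Adj p.1 q.1 → H.Adj p.2 q.2)}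
  have left : ∀ v : V, ∀ f : P, ∃ g : P, (∃ w, (v, w) ∈ g.1) ∧ f ≤ g := by
    intro v f
    by_cases hv : ∃ w, (v, w) ∈ f.1
    · exact ⟨f, hv, le_rfl⟩
    obtain ⟨c, hc⟩ := hH (f.1.image Prod.snd)
    have hc' : ∀ p ∈ f.1, H.Adj c p.2 := fun p hp => hc _ (Finset.mem_image_of_mem _ hp)
    have hne : ∀ p ∈ f.1, p.1 ≠ v := fun p hp h => hv ⟨p.2, h ▸ hp⟩
    refine ⟨⟨insert (v, c) f.1, ?_⟩, ⟨c, Finset.mem_insert_self _ _⟩, Finset.subset_insert _ _⟩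
    intro p hp q hq
    rcases Finset.mem_insert.1 hp with rfl | hp <;> rcases Finset.mem_insert.1 hq with rfl | hq
    · simp
    · exact ⟨⟨fun h => (hne q hq h.symm).elim, fun h => ((hc' q hq).ne h).elim⟩,
        fun _ => hc' q hq⟩
    · exact ⟨⟨fun h => (hne p hp h).elim, fun h => ((hc' p hp).ne h.symm).elim⟩,
        fun _ => (hc' p hp).symm⟩
    · exact f.2 p hp q hq
  have right : ∀ w : W, ∀ f : P, ∃ g : P, (∃ v, (v, w) ∈ g.1) ∧ f ≤ g := by
    intro w f
    by_cases hw : ∃ v, (v, w) ∈ f.1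
    · exact ⟨f, hw, le_rfl⟩
    obtain ⟨c, hc⟩ := hG (f.1.image Prod.fst)
    have hc' : ∀ p ∈ f.1, Gᶜ.Adj c p.1 := fun p hp => hc _ (Finset.mem_image_of_mem _ hp)
    have hne : ∀ p ∈ f.1, p.2 ≠ w := fun p hp h => hw ⟨p.1, h ▸ hp⟩
    refine ⟨⟨insert (c, w) f.1, ?_⟩, ⟨c, Finset.mem_insert_self _ _⟩, Finset.subset_insert _ _⟩
    intro p hp q hq
    rcases Finset.mem_insert.1 hp with rfl | hp <;> rcases Finset.mem_insert.1 hq with rfl | hq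
    · simp
    · exact ⟨⟨fun h => ((hc' q hq).ne h).elim, fun h => (hne q hq h.symm).elim⟩,
        fun h => ((hc' q hq).2 h).elim⟩
    · exact ⟨⟨fun h => ((hc' p hp).ne h.symm).elim, fun h => (hne p hp h).elim⟩,
        fun h => ((hc' p hp).2 h.symm).elim⟩
    · exact f.2 p hp q hq
  let D : V ⊕ W → Order.Cofinal P := Sum.elim
    (fun v => ⟨{g | ∃ w, (v, w) ∈ g.1}, left v⟩) (fun w => ⟨{g | ∃ v, (v, w) ∈ g.1}, right w⟩)
  have : Encodable (V ⊕ W) := Classical.choice (nonempty_encodable _)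
  let I : Order.Ideal P := Order.idealOfCofinals ⟨∅, by simp⟩ D
  have hl : ∀ v, ∃ w, ∃ g ∈ I, (v, w) ∈ g.1 := fun v => by
    obtain ⟨g, ⟨w, hw⟩, hg⟩ := Order.cofinal_meets_idealOfCofinals ⟨∅, by simp⟩ D (Sum.inl v)
    exact ⟨w, g, hg, hw⟩
  have hr : ∀ w, ∃ v, ∃ g ∈ I, (v, w) ∈ g.1 := fun w => by
    obtain ⟨g, ⟨v, hv⟩, hg⟩ := Order.cofinal_meets_idealOfCofinals ⟨∅, by simp⟩ D (Sum.inr w)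
    exact ⟨v, g, hg, hv⟩
  have key : ∀ p q : V × W, (∃ g ∈ I, p ∈ g.1) → (∃ g ∈ I, q ∈ g.1) →
      (p.1 = q.1 ↔ p.2 = q.2) ∧ (G.Adj p.1 q.1 → H.Adj p.2 q.2) := by
    rintro p q ⟨g, hg, hp⟩ ⟨h, hh, hq⟩
    obtain ⟨m, -, hgm, hhm⟩ := I.directed g hg h hh
    exact m.2 p (hgm hp) q (hhm hq)
  choose f hf using hl
  refine ⟨⟨f, fun {a b} hab => (key (a, f a) (b, f b) (hf a) (hf b)).2 hab⟩, ?_, ?_⟩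
  · intro a b hab
    exact (key (a, f a) (b, f b) (hf a) (hf b)).1.2 hab
  · intro w
    obtain ⟨v, hv⟩ := hr w
    exact ⟨v, (key (v, f v) (v, w) (hf v) hv).1.1 rfl⟩

/-- The Rado graph exists: join distinct `m`, `n` when one of them is the position of a binary
digit `1` of the other. -/
theorem exists_isRado : ∃ R : SimpleGraph ℕ, IsRado R := by
  classical
  let R : SimpleGraph ℕ :=
    { Adj := fun m n => m ≠ n ∧ (m ∈ n.bitIndices ∨ n ∈ m.bitIndices)
      symm := ⟨fun _ _ h => ⟨h.1.symm, h.2.symm⟩⟩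
      loopless := ⟨fun _ h => h.1 rfl⟩ }
  refine ⟨R, inferInstance, inferInstance, fun A B hAB => ?_⟩
  -- A high binary digit `N` makes `z` larger than every element of `A ∪ B`.
  obtain ⟨N, hN⟩ : ∃ N, ∀ x ∈ A ∪ B, x < N :=
    ⟨(A ∪ B).sup id + 1, fun x hx => Nat.lt_succ_of_le (Finset.le_sup (f := id) hx)⟩
  obtain ⟨z, hz⟩ : ∃ z : ℕ, z.bitIndices.toFinset = insert N A :=
    ⟨_, Finset.toFinset_bitIndices_sum_two_pow _⟩
  have hmem : ∀ x, x ∈ z.bitIndices ↔ x = N ∨ x ∈ A := fun x => by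
    rw [← List.mem_toFinset, hz, Finset.mem_insert]
  have hlt : ∀ {m n : ℕ}, m ∈ n.bitIndices → m < n := fun h =>
    Nat.lt_two_pow_self.trans_le (Nat.two_pow_le_of_mem_bitIndices h)
  have hNz : N < z := hlt ((hmem N).2 (Or.inl rfl))
  have hz' : ∀ x ∈ A ∪ B, x < z := fun x hx => (hN x hx).trans hNz
  refine ⟨z, fun h => (hz' z (by simp [h])).false, fun h => (hz' z (by simp [h])).false,
    fun a ha => ⟨(hz' a (by simp [ha])).ne', Or.inr ((hmem a).2 (Or.inr ha))⟩, ?_⟩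
  rintro b hb ⟨-, h | h⟩
  · exact (hlt h).not_gt (hz' b (by simp [hb]))
  · rcases (hmem b).1 h with rfl | h
    · exact (hN b (by simp [hb])).false
    · exact Finset.disjoint_left.1 hAB h hb

theorem IsRado.hasCones {W : Type*} {R : SimpleGraph W} (hR : IsRado R) : HasCones R := fun A => by
  obtain ⟨z, -, -, hz, -⟩ := hR.2.2 A ∅ (by simp)
  exact ⟨z, hz⟩

theorem IsRado.hasCones_compl {W : Type*} {R : SimpleGraph W} (hR : IsRado R) :
    HasCones Rᶜ := fun B => by
  obtain ⟨z, -, hzB, -, hz⟩ := hR.2.2 ∅ B (by simp)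
  exact ⟨z, fun b hb => ⟨fun h => hzB (h ▸ hb), hz b hb⟩⟩

/-! ### Complements and infinite independent sets -/

/-- The inverse of a monomorphism between complements is a monomorphism of the original graph, and
the inverse of a bimorphism is a bimorphism of the complement. -/
theorem IsMBHomogeneous.compl {V : Type*} {G : SimpleGraph V} (hG : IsMBHomogeneous G) :
    IsMBHomogeneous Gᶜ := by
  classical
  intro A f hinj hf
  cases isEmpty_or_nonempty V
  · exact ⟨⟨id, id⟩, Function.bijective_id, fun a => isEmptyElim a⟩
  have hli : ∀ a ∈ A, Function.invFunOn f A (f a) = a := fun a ha => hinj.leftInvOn_invFunOn ha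
  obtain ⟨F, hF, hFA⟩ := hG (A.image f) (Function.invFunOn f A)
    (by
      intro x hx y hy hxy
      obtain ⟨a, ha, rfl⟩ := Finset.mem_image.1 hx
      obtain ⟨b, hb, rfl⟩ := Finset.mem_image.1 hy
      rw [hli a ha, hli b hb] at hxy
      rw [hxy])
    (by
      intro x hx y hy hxy
      obtain ⟨a, ha, rfl⟩ := Finset.mem_image.1 hx
      obtain ⟨b, hb, rfl⟩ := Finset.mem_image.1 hy
      rw [hli a ha, hli b hb]
      by_contra h
      exact (hf a ha b hb ⟨fun e => hxy.ne (congrArg f e), h⟩).2 hxy)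
  let e := Equiv.ofBijective F hF
  have he : ∀ x, F (e.symm x) = x := e.apply_symm_apply
  refine ⟨⟨e.symm, fun {a b} hab => ⟨fun h => hab.1 (e.symm.injective h), fun h => hab.2 ?_⟩⟩,
    e.symm.bijective, fun a ha => ?_⟩
  · simpa only [he] using F.map_rel h
  · refine hF.1 ((he a).trans ?_)
    rw [hFA _ (Finset.mem_image_of_mem f ha), hli a ha]

/-- The infinite Ramsey theorem for graphs, by the choice of a nonprincipal ultrafilter. -/
theorem exists_infinite_indep_or_clique {V : Type*} [Infinite V] (G : SimpleGraph V) :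
    (∃ j : ℕ → V, Pairwise fun m n => Gᶜ.Adj (j m) (j n)) ∨
      ∃ j : ℕ → V, Pairwise fun m n => G.Adj (j m) (j n) := by
  -- If `U`-almost every vertex is `H`-adjacent to `U`-almost every vertex, then a sequence of
  -- pairwise adjacent vertices can be chosen greedily.
  have greedy : ∀ H : SimpleGraph V,
      (∀ᶠ v in (Filter.hyperfilter V : Filter V), ∀ᶠ w in (Filter.hyperfilter V : Filter V),
        H.Adj v w) → ∃ j : ℕ → V, Pairwise fun m n => H.Adj (j m) (j n) := by
    intro H hH
    have : Std.Symm H.Adj := H.symm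
    obtain ⟨j, -, hj⟩ := exists_seq_of_forall_finset_exists'
      (fun v => ∀ᶠ w in (Filter.hyperfilter V : Filter V), H.Adj v w) H.Adj fun s hs =>
        (hH.and ((Filter.eventually_all_finset s).2 hs)).exists
    exact ⟨j, hj⟩
  by_cases h : ∀ᶠ v in (Filter.hyperfilter V : Filter V),
      ∀ᶠ w in (Filter.hyperfilter V : Filter V), G.Adj v w
  · exact Or.inr (greedy G h)
  · refine Or.inl (greedy Gᶜ ?_)
    filter_upwards [Ultrafilter.eventually_not.2 h] with v hv
    have hne : ∀ᶠ w in (Filter.hyperfilter V : Filter V), w ≠ v :=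
      Filter.hyperfilter_le_cofinite (Set.finite_singleton v).compl_mem_cofinite
    filter_upwards [Ultrafilter.eventually_not.2 hv, hne] with w hw hwv
    exact ⟨hwv.symm, hw⟩

theorem HasCones.exists_infinite_clique {V : Type*} {G : SimpleGraph V} (hG : HasCones G) :
    ∃ j : ℕ → V, Pairwise fun m n => G.Adj (j m) (j n) := by
  have : Std.Symm G.Adj := G.symm
  obtain ⟨j, -, hj⟩ := exists_seq_of_forall_finset_exists' (fun _ => True) G.Adj fun s _ => by
    obtain ⟨c, hc⟩ := hG s
    exact ⟨c, trivial, fun x hx => (hc x hx).symm⟩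
  exact ⟨j, hj⟩

/-! ### Finite sets with a common neighbour -/

/-- Having a common neighbour passes from a finite family of vertices to any other one carrying at
least the same edges. -/
theorem IsMBHomogeneous.cone_transfer {V ι : Type*} [Finite ι] {G : SimpleGraph V}
    (hMB : IsMBHomogeneous G) (u w : ι → V) (hu : Function.Injective u)
    (hw : Function.Injective w) (huw : ∀ a b, G.Adj (u a) (u b) → G.Adj (w a) (w b))
    (hc : ∃ c, ∀ i, G.Adj c (u i)) : ∃ c, ∀ i, G.Adj c (w i) := by
  classical
  have := Fintype.ofFinite ι
  obtain ⟨c, hc⟩ := hc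
  cases isEmpty_or_nonempty ι
  · exact ⟨c, fun i => isEmptyElim i⟩
  have hinv : ∀ i, Function.invFun u (u i) = i := Function.leftInverse_invFun hu
  obtain ⟨F, -, hF⟩ := hMB (Finset.univ.image u) (w ∘ Function.invFun u)
    (by
      intro x hx y hy hxy
      obtain ⟨a, -, rfl⟩ := Finset.mem_image.1 hx
      obtain ⟨b, -, rfl⟩ := Finset.mem_image.1 hy
      simp only [Function.comp, hinv] at hxy
      rw [hw hxy])
    (by
      intro x hx y hy hxy
      obtain ⟨a, -, rfl⟩ := Finset.mem_image.1 hx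
      obtain ⟨b, -, rfl⟩ := Finset.mem_image.1 hy
      simpa only [Function.comp, hinv] using huw a b hxy)
  refine ⟨F c, fun i => ?_⟩
  have := F.map_rel (hc i)
  rwa [hF _ (Finset.mem_image_of_mem u (Finset.mem_univ i)), Function.comp, hinv] at this

/-- The configuration to be refuted: `j` enumerates an infinite independent set, `k = l + 2`
vertices always have a common neighbour, but `k + 1` independent vertices never do. -/
structure CriticalGraph {V : Type*} (G : SimpleGraph V) (j : ℕ → V) (l : ℕ) : Prop where
  mb : IsMBHomogeneous G
  indep : Pairwise fun m n => Gᶜ.Adj (j m) (j n)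
  small : ∀ A : Finset V, A.card ≤ l + 2 → ∃ c, ∀ a ∈ A, G.Adj c a
  large : ∀ (T : Finset V) (c : V), T.card = l + 3 → (∀ a ∈ T, ∀ b ∈ T, ¬ G.Adj a b) →
    ¬ ∀ a ∈ T, G.Adj c a

namespace CriticalGraph

variable {V : Type*} {G : SimpleGraph V} {j : ℕ → V} {l : ℕ}

theorem inj (h : CriticalGraph G j l) : Function.Injective j := fun m n hmn => by
  by_contra hne
  exact (h.indep hne).1 hmn

theorem not_adj (h : CriticalGraph G j l) (m n : ℕ) : ¬ G.Adj (j m) (j n) := by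
  rcases eq_or_ne m n with rfl | hne
  · exact G.irrefl
  · exact (h.indep hne).2

theorem ne_of_adj (h : CriticalGraph G j l) {p : V} {m : ℕ} (hp : G.Adj p (j m)) (n : ℕ) :
    p ≠ j n := by
  rintro rfl
  exact h.not_adj _ _ hp

theorem card_le (h : CriticalGraph G j l) {c : V} {T : Finset ℕ}
    (hT : ∀ n ∈ T, G.Adj c (j n)) : T.card ≤ l + 2 := by
  classical
  by_contra hcard
  obtain ⟨S, hST, hS⟩ := Finset.exists_subset_card_eq (show l + 3 ≤ T.card by omega)
  refine h.large (S.image j) c ((Finset.card_image_of_injective _ h.inj).trans hS) ?_ ?_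
  · intro a ha b hb
    obtain ⟨m, -, rfl⟩ := Finset.mem_image.1 ha
    obtain ⟨n, -, rfl⟩ := Finset.mem_image.1 hb
    exact h.not_adj m n
  · intro a ha
    obtain ⟨m, hm, rfl⟩ := Finset.mem_image.1 ha
    exact hT m (hST hm)

/-- A vertex joined to `k` members of the independent set is joined to no other. -/
theorem mem_of_adj (h : CriticalGraph G j l) {p : V} {T : Finset ℕ} (hcard : T.card = l + 2)
    (hT : ∀ n ∈ T, G.Adj p (j n)) {n : ℕ} (hn : G.Adj p (j n)) : n ∈ T := by
  by_contra hnT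
  have := h.card_le (c := p) (T := insert n T) fun m hm => by
    rcases Finset.mem_insert.1 hm with rfl | hm
    exacts [hn, hT m hm]
  rw [Finset.card_insert_of_notMem hnT] at this
  omega

/-- If `p` is joined to `k` members of the independent set, then every neighbour of `p` outside
the independent set must be joined to one of them, as `p` does not have `k + 1`
independent neighbours. -/
theorem exists_hit (h : CriticalGraph G j l) {p c : V} {T : Finset ℕ} (hcard : T.card = l + 2)
    (hT : ∀ n ∈ T, G.Adj p (j n)) (hcp : G.Adj c p) (hc : ∀ n, c ≠ j n) :
    ∃ t ∈ T, G.Adj c (j t) := by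
  classical
  by_contra! hno
  have hcT : c ∉ T.image j := fun hmem => by
    obtain ⟨n, -, hn⟩ := Finset.mem_image.1 hmem
    exact hc n hn.symm
  refine h.large (insert c (T.image j)) p ?_ ?_ ?_
  · rw [Finset.card_insert_of_notMem hcT, Finset.card_image_of_injective _ h.inj, hcard]
  · intro a ha b hb
    rcases Finset.mem_insert.1 ha with rfl | ha' <;> rcases Finset.mem_insert.1 hb with rfl | hb'
    · exact G.irrefl
    · obtain ⟨n, hn, rfl⟩ := Finset.mem_image.1 hb'
      exact hno n hn
    · obtain ⟨n, hn, rfl⟩ := Finset.mem_image.1 ha'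
      exact fun hadj => hno n hn hadj.symm
    · obtain ⟨m, -, rfl⟩ := Finset.mem_image.1 ha'
      obtain ⟨n, -, rfl⟩ := Finset.mem_image.1 hb'
      exact h.not_adj m n
  · intro a ha
    rcases Finset.mem_insert.1 ha with rfl | ha
    · exact hcp.symm
    · obtain ⟨n, hn, rfl⟩ := Finset.mem_image.1 ha
      exact hT n hn

theorem exists_cone_block (h : CriticalGraph G j l) (T : Finset ℕ) (hcard : T.card ≤ l + 2) :
    ∃ p, ∀ n ∈ T, G.Adj p (j n) := by
  classical
  obtain ⟨p, hp⟩ := h.small (T.image j) (Finset.card_image_le.trans hcard)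
  exact ⟨p, fun n hn => hp _ (Finset.mem_image_of_mem j hn)⟩

/-- An edge together with `k - 1` further vertices has a common neighbour. -/
theorem cone_edge (h : CriticalGraph G j l) (x y : V) (w : Fin (l + 1) → V) (hxy : G.Adj x y)
    (hw : Function.Injective w) (hx : ∀ t, x ≠ w t) (hy : ∀ t, y ≠ w t) :
    ∃ c, G.Adj c x ∧ G.Adj c y ∧ ∀ t, G.Adj c (w t) := by
  classical
  -- With `p` above a block `I`, a common neighbour `c` of `p` and of `k - 1` members outside `I`
  -- is joined to some `j i` with `i ∈ I`; then `p`, `j i` is the only edge below `c`.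
  obtain ⟨p, hp⟩ := h.exists_cone_block (Finset.Ico (l + 1) (2 * l + 3)) (by simp; omega)
  have hcard : (Finset.Ico (l + 1) (2 * l + 3)).card = l + 2 := by simp; omega
  obtain ⟨c, hc⟩ := h.small (insert p ((Finset.range (l + 1)).image j))
    ((Finset.card_insert_le _ _).trans
      (by have := Finset.card_image_le (s := Finset.range (l + 1)) (f := j); simp at this; omega))
  have hcS : ∀ n < l + 1, G.Adj c (j n) := fun n hn =>
    hc _ (Finset.mem_insert_of_mem (Finset.mem_image_of_mem j (Finset.mem_range.2 hn)))
  have hcp : G.Adj c p := hc p (Finset.mem_insert_self _ _)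
  obtain ⟨i, hi, hci⟩ := h.exists_hit hcard hp hcp (h.ne_of_adj (hcS 0 (by omega)))
  have hpJ := h.ne_of_adj (hp i hi)
  have hpn : ∀ t : Fin (l + 1), ¬ G.Adj p (j t) := fun t hadj => by
    have := h.mem_of_adj hcard hp hadj
    simp at this; omega
  have hin : ∀ n < l + 1, i ≠ n := fun n hn => by simp at hi; omega
  obtain ⟨d, hd⟩ := h.mb.cone_transfer
    (Sum.elim ![p, j i] fun t : Fin (l + 1) => j t) (Sum.elim ![x, y] w)
    (Function.Injective.sumElim
      (by simp [Function.Injective, Fin.forall_fin_succ, hpJ, (hpJ _).symm])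
      (h.inj.comp Fin.val_injective)
      (by simp [Fin.forall_fin_succ, hpJ, h.inj.eq_iff, hin]))
    (Function.Injective.sumElim
      (by simp [Function.Injective, Fin.forall_fin_succ, hxy.ne, hxy.ne.symm]) hw
      (by simp [Fin.forall_fin_two, hx, hy]))
    (by
      simp only [Sum.forall, Sum.elim_inl, Sum.elim_inr, Fin.forall_fin_two]
      simp [hxy, hxy.symm, h.not_adj, hpn, G.adj_comm _ p])
    ⟨c, by
      simp only [Sum.forall, Sum.elim_inl, Sum.elim_inr, Fin.forall_fin_two]
      exact ⟨⟨hcp, hci⟩, fun t => hcS t t.2⟩⟩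
  exact ⟨d, hd (Sum.inl 0), hd (Sum.inl 1), fun t => hd (Sum.inr t)⟩

/-- Two disjoint edges together with `k - 2` further vertices have a common neighbour. -/
theorem cone_two_edges (h : CriticalGraph G j l) (x₁ y₁ x₂ y₂ : V) (w : Fin l → V)
    (h₁ : G.Adj x₁ y₁) (h₂ : G.Adj x₂ y₂)
    (hinj : Function.Injective (Sum.elim ![x₁, y₁, x₂, y₂] w)) :
    ∃ c, G.Adj c x₁ ∧ G.Adj c y₁ ∧ G.Adj c x₂ ∧ G.Adj c y₂ ∧ ∀ t, G.Adj c (w t) := by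
  classical
  -- As for a single edge, but with `p` and `q` above two disjoint blocks.
  obtain ⟨p, hp⟩ := h.exists_cone_block (Finset.Ico l (2 * l + 2)) (by simp; omega)
  have hpcard : (Finset.Ico l (2 * l + 2)).card = l + 2 := by simp; omega
  obtain ⟨q, hq⟩ := h.exists_cone_block (Finset.Ico (2 * l + 2) (3 * l + 4)) (by simp; omega)
  have hqcard : (Finset.Ico (2 * l + 2) (3 * l + 4)).card = l + 2 := by simp; omega
  obtain ⟨c, hc⟩ := h.small (insert p (insert q ((Finset.range l).image j)))
    (by
      have h₀ := Finset.card_image_le (s := Finset.range l) (f := j)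
      have h₁ := Finset.card_insert_le q ((Finset.range l).image j)
      have h₂ := Finset.card_insert_le p (insert q ((Finset.range l).image j))
      simp only [Finset.card_range] at h₀
      omega)
  have hcS : ∀ t : Fin l, G.Adj c (j t) := fun t => hc _ (Finset.mem_insert_of_mem
    (Finset.mem_insert_of_mem (Finset.mem_image_of_mem j (Finset.mem_range.2 t.2))))
  have hcp : G.Adj c p := hc p (Finset.mem_insert_self _ _)
  have hcq : G.Adj c q := hc q (Finset.mem_insert_of_mem (Finset.mem_insert_self _ _))
  have hpmem : ∀ n, G.Adj p (j n) → l ≤ n ∧ n < 2 * l + 2 := fun n hn =>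
    Finset.mem_Ico.1 (h.mem_of_adj hpcard hp hn)
  have hqmem : ∀ n, G.Adj q (j n) → 2 * l + 2 ≤ n ∧ n < 3 * l + 4 := fun n hn =>
    Finset.mem_Ico.1 (h.mem_of_adj hqcard hq hn)
  have hpJ : ∀ n, p ≠ j n := h.ne_of_adj (hp l (by simp; omega))
  have hqJ : ∀ n, q ≠ j n := h.ne_of_adj (hq (2 * l + 2) (by simp; omega))
  have hcJ : ∀ n, c ≠ j n := by
    rintro n rfl
    have := hpmem n hcp.symm
    have := hqmem n hcq.symm
    omega
  obtain ⟨i, hi, hci⟩ := h.exists_hit hpcard hp hcp hcJ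
  obtain ⟨i', hi', hci'⟩ := h.exists_hit hqcard hq hcq hcJ
  have hpq : ¬ G.Adj p q := fun hadj => by
    obtain ⟨n, hn, hpn⟩ := h.exists_hit hqcard hq hadj hpJ
    have := hpmem n hpn
    simp at hn; omega
  have hpi := hp i hi
  have hqi' := hq i' hi'
  have hi := hpmem i hpi
  have hi' := hqmem i' hqi'
  have hpq' : p ≠ q := by
    rintro rfl
    have := hqmem i hpi
    omega
  have hpi' : ¬ G.Adj p (j i') := fun hadj => by have := hpmem _ hadj; omega
  have hqi : ¬ G.Adj q (j i) := fun hadj => by have := hqmem _ hadj; omega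
  have hpS : ∀ t : Fin l, ¬ G.Adj p (j t) := fun t hadj => by have := hpmem _ hadj; omega
  have hqS : ∀ t : Fin l, ¬ G.Adj q (j t) := fun t hadj => by have := hqmem _ hadj; omega
  have hii' : i ≠ i' := by omega
  have hiS : ∀ t : Fin l, i ≠ t := fun t => by omega
  have hiS' : ∀ t : Fin l, i' ≠ t := fun t => by omega
  obtain ⟨d, hd⟩ := h.mb.cone_transfer
    (Sum.elim ![p, j i, q, j i'] fun t : Fin l => j t) (Sum.elim ![x₁, y₁, x₂, y₂] w)
    (Function.Injective.sumElim
      (by simp [Function.Injective, Fin.forall_fin_succ, hpJ, hqJ, (hpJ _).symm, (hqJ _).symm,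
        hpq', hpq'.symm, h.inj.eq_iff, hii', hii'.symm])
      (h.inj.comp Fin.val_injective)
      (by simp [Fin.forall_fin_succ, hpJ, hqJ, h.inj.eq_iff, hiS, hiS']))
    hinj
    (by
      simp only [Sum.forall, Sum.elim_inl, Sum.elim_inr, Fin.forall_fin_succ]
      simp [h₁, h₁.symm, h₂, h₂.symm, h.not_adj, hpS, hqS, hpi', hqi, hpq, G.adj_comm _ p,
        G.adj_comm _ q])
    ⟨c, by
      simp only [Sum.forall, Sum.elim_inl, Sum.elim_inr, Fin.forall_fin_succ]
      simp [hcp, hcq, hci, hci', hcS]⟩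
  exact ⟨d, hd (Sum.inl 0), hd (Sum.inl 1), hd (Sum.inl 2), hd (Sum.inl 3),
    fun t => hd (Sum.inr t)⟩

/-- A triangle together with `k - 1` further vertices has a common neighbour. -/
theorem cone_triangle (h : CriticalGraph G j l) (x y z : V) (w : Fin (l + 1) → V)
    (hxy : G.Adj x y) (hxz : G.Adj x z) (hyz : G.Adj y z)
    (hinj : Function.Injective (Sum.elim ![x, y, z] w)) :
    ∃ c, G.Adj c x ∧ G.Adj c y ∧ G.Adj c z ∧ ∀ t, G.Adj c (w t) := by
  classical
  -- Two adjacent vertices `p`, `q` are placed above the same block `I`; a common neighbour of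
  -- `p`, `q` and `k - 1` members outside `I` is joined to some `j i`, which completes a triangle.
  have hcard : (Finset.Ico (l + 1) (2 * l + 3)).card = l + 2 := by simp; omega
  obtain ⟨p, hp⟩ := h.exists_cone_block (Finset.Ico (l + 1) (2 * l + 3)) hcard.le
  have hpJ : ∀ n, p ≠ j n := h.ne_of_adj (hp (l + 1) (by simp; omega))
  obtain ⟨q, hqp, hq₀, hq₁⟩ := h.cone_edge p (j (l + 1)) (fun t : Fin (l + 1) => j (l + 2 + t))
    (hp _ (by simp; omega)) (fun s t hst => by have := h.inj hst; omega) (fun _ => hpJ _)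
    (fun t ht => by have := h.inj ht; omega)
  have hq : ∀ n ∈ Finset.Ico (l + 1) (2 * l + 3), G.Adj q (j n) := fun n hn => by
    have hn := Finset.mem_Ico.1 hn
    rcases Nat.eq_or_lt_of_le hn.1 with rfl | hlt
    · exact hq₀
    · have := hq₁ ⟨n - (l + 2), by omega⟩
      rwa [show l + 2 + (n - (l + 2)) = n by omega] at this
  have hqJ : ∀ n, q ≠ j n := h.ne_of_adj hq₀
  obtain ⟨c, hcp, hcq, hcS⟩ := h.cone_edge p q (fun t : Fin (l + 1) => j t) hqp.symm
    (h.inj.comp Fin.val_injective) (fun _ => hpJ _) (fun _ => hqJ _)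
  obtain ⟨i, hi, hci⟩ := h.exists_hit hcard hp hcp (h.ne_of_adj (hcS 0))
  have hpS : ∀ t : Fin (l + 1), ¬ G.Adj p (j t) := fun t hadj => by
    have := h.mem_of_adj hcard hp hadj
    simp at this; omega
  have hqS : ∀ t : Fin (l + 1), ¬ G.Adj q (j t) := fun t hadj => by
    have := h.mem_of_adj hcard hq hadj
    simp at this; omega
  have hiS : ∀ t : Fin (l + 1), i ≠ t := fun t => by simp at hi; omega
  have forall_fin_three : ∀ P : Fin 3 → Prop, (∀ a, P a) ↔ P 0 ∧ P 1 ∧ P 2 := fun P => by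
    simp [Fin.forall_fin_succ]
  obtain ⟨d, hd⟩ := h.mb.cone_transfer
    (Sum.elim ![p, q, j i] fun t : Fin (l + 1) => j t) (Sum.elim ![x, y, z] w)
    (Function.Injective.sumElim
      (by simp [Function.Injective, Fin.forall_fin_succ, hpJ, hqJ, (hpJ _).symm, (hqJ _).symm,
        hqp.ne, hqp.ne.symm])
      (h.inj.comp Fin.val_injective)
      (by simp [forall_fin_three, hpJ, hqJ, h.inj.eq_iff, hiS]))
    hinj
    (by
      simp only [Sum.forall, Sum.elim_inl, Sum.elim_inr, forall_fin_three]
      simp [hxy, hxy.symm, hxz, hxz.symm, hyz, hyz.symm, h.not_adj, hpS, hqS,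
        G.adj_comm (j _) p, G.adj_comm (j _) q])
    ⟨c, by
      simp only [Sum.forall, Sum.elim_inl, Sum.elim_inr, forall_fin_three]
      simp [hcp, hcq, hci, hcS]⟩
  exact ⟨d, hd (Sum.inl 0), hd (Sum.inl 1), hd (Sum.inl 2), fun t => hd (Sum.inr t)⟩

/-- A triangle is placed above three index sets without common element. A vertex joined to the
triangle then has two neighbours among these sets, which together with `k - 1` prescribed
neighbours elsewhere is one too many. -/
theorem false (h : CriticalGraph G j l) : False := by
  classical
  obtain ⟨a₁, ha₁⟩ := h.exists_cone_block (Finset.range (l + 2)) (by simp)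
  have haJ₁ : ∀ n, a₁ ≠ j n := h.ne_of_adj (ha₁ 0 (by simp))
  obtain ⟨a₂, h₂₁, h₂₀, h₂w⟩ := h.cone_edge a₁ (j 0) (fun t : Fin (l + 1) => j (l + 2 + t))
    (ha₁ 0 (by simp)) (fun s t hst => by have := h.inj hst; omega) (fun _ => haJ₁ _)
    (fun t ht => by have := h.inj ht; omega)
  have haJ₂ : ∀ n, a₂ ≠ j n := h.ne_of_adj h₂₀
  have h₂z : G.Adj a₂ (j (l + 2)) := h₂w 0
  obtain ⟨a₃, h₃₁, h₃y, h₃₂, h₃z, h₃w⟩ := h.cone_two_edges a₁ (j 1) a₂ (j (l + 2))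
    (fun t : Fin l => j (2 * l + 3 + t)) (ha₁ 1 (by simp)) h₂z
    (Function.Injective.sumElim
      (by simp [Function.Injective, Fin.forall_fin_succ, haJ₁, haJ₂, (haJ₁ _).symm,
        (haJ₂ _).symm, h₂₁.ne, h₂₁.ne.symm, h.inj.eq_iff])
      (fun s t hst => by have := h.inj hst; omega)
      (by
        simp only [Fin.forall_fin_succ]
        simp [haJ₁, haJ₂, h.inj.eq_iff]
        exact ⟨fun t => by omega, fun t => by omega⟩))
  have haJ₃ : ∀ n, a₃ ≠ j n := h.ne_of_adj h₃y
  obtain ⟨c, hc₁, hc₂, hc₃, hcw⟩ := h.cone_triangle a₁ a₂ a₃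
    (fun t : Fin (l + 1) => j (3 * l + 3 + t)) h₂₁.symm h₃₁.symm h₃₂.symm
    (Function.Injective.sumElim
      (by simp [Function.Injective, Fin.forall_fin_succ, h₂₁.ne, h₂₁.ne.symm, h₃₁.ne,
        h₃₁.ne.symm, h₃₂.ne, h₃₂.ne.symm])
      (fun s t hst => by have := h.inj hst; omega)
      (by simp [Fin.forall_fin_succ, haJ₁, haJ₂, haJ₃]))
  have hcJ : ∀ n, c ≠ j n := h.ne_of_adj (hcw 0)
  obtain ⟨t₁, ht₁, hct₁⟩ := h.exists_hit (T := Finset.range (l + 2)) (by simp) ha₁ hc₁ hcJ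
  obtain ⟨t₂, ht₂, hct₂⟩ := h.exists_hit (p := a₂)
    (T := insert 0 (Finset.Ico (l + 2) (2 * l + 3)))
    (by rw [Finset.card_insert_of_notMem (by simp), Nat.card_Ico]; omega)
    (by
      intro n hn
      rcases Finset.mem_insert.1 hn with rfl | hn
      · exact h₂₀
      · have hn := Finset.mem_Ico.1 hn
        have := h₂w ⟨n - (l + 2), by omega⟩
        rwa [show l + 2 + (n - (l + 2)) = n by omega] at this) hc₂ hcJ
  obtain ⟨t₃, ht₃, hct₃⟩ := h.exists_hit (p := a₃)
    (T := insert 1 (insert (l + 2) (Finset.Ico (2 * l + 3) (3 * l + 3))))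
    (by
      rw [Finset.card_insert_of_notMem (by simp), Finset.card_insert_of_notMem (by simp; omega),
        Nat.card_Ico]
      omega)
    (by
      intro n hn
      rcases Finset.mem_insert.1 hn with rfl | hn
      · exact h₃y
      rcases Finset.mem_insert.1 hn with rfl | hn
      · exact h₃z
      · have hn := Finset.mem_Ico.1 hn
        have := h₃w ⟨n - (2 * l + 3), by omega⟩
        rwa [show 2 * l + 3 + (n - (2 * l + 3)) = n by omega] at this) hc₃ hcJ
  simp only [Finset.mem_insert, Finset.mem_Ico, Finset.mem_range] at ht₁ ht₂ ht₃
  obtain ⟨s, hs, hst, hcs⟩ : ∃ s < 3 * l + 3, s ≠ t₁ ∧ G.Adj c (j s) := by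
    by_cases h₂ : t₂ = t₁
    · exact ⟨t₃, by omega, by omega, hct₃⟩
    · exact ⟨t₂, by omega, h₂, hct₂⟩
  have hle := h.card_le (c := c) (T := insert s (insert t₁ (Finset.Ico (3 * l + 3) (4 * l + 4))))
    (by
      intro n hn
      rcases Finset.mem_insert.1 hn with rfl | hn
      · exact hcs
      rcases Finset.mem_insert.1 hn with rfl | hn
      · exact hct₁
      · have hn := Finset.mem_Ico.1 hn
        have := hcw ⟨n - (3 * l + 3), by omega⟩
        rwa [show 3 * l + 3 + (n - (3 * l + 3)) = n by omega] at this)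
  rw [Finset.card_insert_of_notMem (by simp; omega),
    Finset.card_insert_of_notMem (by simp; omega), Nat.card_Ico] at hle
  omega

end CriticalGraph

/-- A connected MB-homogeneous graph with an infinite independent set has cones. -/
theorem IsMBHomogeneous.hasCones {V : Type*} {G : SimpleGraph V} (hMB : IsMBHomogeneous G)
    (hconn : G.Connected) (j : ℕ → V) (hj : Pairwise fun m n => Gᶜ.Adj (j m) (j n)) :
    HasCones G := by
  classical
  by_contra hcon
  have hex : ∃ m, ∃ A : Finset V, A.card = m ∧ ¬ ∃ c, ∀ a ∈ A, G.Adj c a := by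
    simp only [HasCones, not_forall] at hcon
    obtain ⟨A, hA⟩ := hcon
    exact ⟨_, A, rfl, hA⟩
  obtain ⟨A, hAcard, hA⟩ := Nat.find_spec hex
  have hsmall : ∀ B : Finset V, B.card < Nat.find hex → ∃ c, ∀ a ∈ B, G.Adj c a := fun B hB => by
    by_contra hno
    exact Nat.find_min hex hB ⟨B, rfl, hno⟩
  -- From here on `m` is the least size of a set without a common neighbour.
  generalize Nat.find hex = m at hAcard hsmall
  have hlarge : ∀ (T : Finset V) (c : V), T.card = m →
      (∀ a ∈ T, ∀ b ∈ T, ¬ G.Adj a b) → ¬ ∀ a ∈ T, G.Adj c a := by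
    intro T c hT hind hc
    let e : T ≃ A := Fintype.equivOfCardEq (by simp [hT, hAcard])
    obtain ⟨d, hd⟩ := hMB.cone_transfer (fun t : T => (t : V)) (fun t => (e t : V))
      Subtype.val_injective (Subtype.val_injective.comp e.injective)
      (fun a b hab => (hind a a.2 b b.2 hab).elim) ⟨c, fun t => hc t t.2⟩
    exact hA ⟨d, fun a ha => by simpa using hd (e.symm ⟨a, ha⟩)⟩
  have : Nontrivial V := ⟨j 0, j 1, (hj (by simp : (0 : ℕ) ≠ 1)).1⟩
  rcases m with _ | _ | _ | l
  · obtain ⟨v⟩ := hconn.nonempty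
    exact hA ⟨v, by simp [Finset.card_eq_zero.1 hAcard]⟩
  · obtain ⟨v, rfl⟩ := Finset.card_eq_one.1 hAcard
    obtain ⟨c, hc⟩ := hconn.preconnected.exists_adj_of_nontrivial v
    exact hA ⟨c, by simpa using hc.symm⟩
  · -- Here adjacency is transitive, so the connected graph `G` is complete.
    have hreach : ∀ {u v : V}, G.Walk u v → u = v ∨ G.Adj u v := by
      intro u v p
      induction p with
      | nil => exact Or.inl rfl
      | @cons u x v hux _ ih =>
        rcases ih with rfl | hxv
        · exact Or.inr hux
        by_contra! hne
        refine hlarge {u, v} x (Finset.card_pair hne.1) ?_ ?_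
        · simp [hne.2, G.adj_comm v u]
        · simp [hux.symm, hxv]
    obtain ⟨p⟩ := hconn.preconnected (j 0) (j 1)
    have h01 := hj (by simp : (0 : ℕ) ≠ 1)
    exact (hreach p).elim h01.1 h01.2
  · exact CriticalGraph.false (l := l)
      ⟨hMB, hj, fun B hB => hsmall B (by omega), fun T c hT => hlarge T c (by omega)⟩

/-- Common neighbours produce infinite cliques, that is, infinite independent sets of `Gᶜ`, so that
`IsMBHomogeneous.hasCones` applies to `Gᶜ` as well. -/
theorem IsMBHomogeneous.hasCones_and_compl {V : Type*} {G : SimpleGraph V}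
    (hMB : IsMBHomogeneous G) (hconn : G.Connected) (hcconn : Gᶜ.Connected) (j : ℕ → V)
    (hj : Pairwise fun m n => Gᶜ.Adj (j m) (j n)) : HasCones G ∧ HasCones Gᶜ := by
  have hG := hMB.hasCones hconn j hj
  obtain ⟨i, hi⟩ := hG.exists_infinite_clique
  exact ⟨hG, hMB.compl.hasCones hcconn i (by simpa only [compl_compl] using hi)⟩


/-- If `G` is a countably infinite MB-homogeneous graph such that both
`G` and its complement are connected, then `G` is bimorphism-equivalent to the Rado
graph. -/
theorem mb_connected_bimEquiv_rado {V : Type*} [Countable V] [Infinite V]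
    (G : SimpleGraph V) (hMB : IsMBHomogeneous G)
    (hconn : G.Connected) (hcconn : Gᶜ.Connected) :
    ∃ R : SimpleGraph ℕ, IsRado R ∧ BimEquiv G R := by
  obtain ⟨R, hR⟩ := exists_isRado
  have hcones : HasCones G ∧ HasCones Gᶜ := by
    rcases exists_infinite_indep_or_clique G with ⟨j, hj⟩ | ⟨j, hj⟩
    · exact hMB.hasCones_and_compl hconn hcconn j hj
    · simpa only [compl_compl, and_comm] using
        hMB.compl.hasCones_and_compl hcconn (by rwa [compl_compl]) j
          (by simpa only [compl_compl] using hj)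
  exact ⟨R, hR, exists_bijective_hom hcones.2 hR.hasCones,
    exists_bijective_hom hR.hasCones_compl hcones.1⟩
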